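/- Let G be a finite simple 2-regular graph, i.e., a disjoint union of m cycles of lengths r₁, …, r_m (each r_i ≥ 3), let n = r₁ + ⋯ + r_m, let A be a set of n agents partitioned into two types of sizes n₁ ≥ 1 and n₂ ≥ 1 with n₁ + n₂ = n, and let τ ∈ (1/2, 1). Then there exists a bijective placement p : A → V(G) with placement cost 0 (all agents content) if and only if there is a subset S ⊆ {1, …, m} with ∑_{i∈S} r_i = n₁. -/

import Mathlib

open Finset
open scoped Classical

noncomputable section

namespace Schelling

variable {V A : Type*} [Fintype V] [Fintype A] {k : ℕ}

/-- The set of neighbors of agent `a` under placement `p`. -/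
def nbrs (G : SimpleGraph V) (p : A → V) (a : A) : Finset A :=
  Finset.univ.filter fun b => G.Adj (p a) (p b)

/-- `|N⁺_p(a)|`: the number of neighbors of `a` under `p` having the same type as `a`. -/
def posCount (G : SimpleGraph V) (t : A → Fin k) (p : A → V) (a : A) : ℕ :=
  (Finset.univ.filter fun b => G.Adj (p a) (p b) ∧ t b = t a).card

/-- One-versus-all `|N⁻_p(a)|`: the number of neighbors of `a` whose type differs from `t a`. -/
def negCountAll (G : SimpleGraph V) (t : A → Fin k) (p : A → V) (a : A) : ℕ :=
  (Finset.univ.filter fun b => G.Adj (p a) (p b) ∧ t b ≠ t a).card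

/-- One-versus-one `|N⁻_p(a)|`: the size of a largest set of neighbors of `a`
of one common type different from `t a`. -/
def negCountOne (G : SimpleGraph V) (t : A → Fin k) (p : A → V) (a : A) : ℕ :=
  (Finset.univ.filter fun T : Fin k => T ≠ t a).sup fun T =>
    (Finset.univ.filter fun b => G.Adj (p a) (p b) ∧ t b = T).card

/-- The cost of agent `a` in the one-versus-all version. -/
def costAll (G : SimpleGraph V) (t : A → Fin k) (τ : ℝ) (p : A → V) (a : A) : ℝ :=
  if nbrs G p a = ∅ then τ
  else max 0 (τ - (posCount G t p a : ℝ) /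
    ((posCount G t p a : ℝ) + (negCountAll G t p a : ℝ)))

/-- The cost of agent `a` in the one-versus-one version. -/
def costOne (G : SimpleGraph V) (t : A → Fin k) (τ : ℝ) (p : A → V) (a : A) : ℝ :=
  if nbrs G p a = ∅ then τ
  else max 0 (τ - (posCount G t p a : ℝ) /
    ((posCount G t p a : ℝ) + (negCountOne G t p a : ℝ)))

/-- A swap of the (distinct) agents `a` and `b` turning placement `p` into `q`,
which strictly decreases the cost of both agents (cost function `c`). -/
def SwapMove (c : (A → V) → A → ℝ) (p q : A → V) (a b : A) : Prop :=
  a ≠ b ∧ q = p ∘ (Equiv.swap a b) ∧ c q a < c p a ∧ c q b < c p b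

/-- `q` is obtained from `p` by an improving swap. -/
def ImprovingSwap (c : (A → V) → A → ℝ) (p q : A → V) : Prop :=
  ∃ a b, SwapMove c p q a b

/-- A placement is swap-stable if it admits no improving swap. -/
def SwapStable (c : (A → V) → A → ℝ) (p : A → V) : Prop :=
  ∀ q, ¬ ImprovingSwap c p q

/-- Some finite sequence of improving swaps starting at `p₀` ends in a swap-stable placement. -/
def ReachesStableSwap (c : (A → V) → A → ℝ) (p₀ : A → V) : Prop :=
  ∃ (n : ℕ) (q : ℕ → A → V), q 0 = p₀ ∧
    (∀ i < n, ImprovingSwap c (q i) (q (i + 1))) ∧ SwapStable c (q n)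

/-- A jump of agent `a` to the node `v` (unoccupied under `p`) turning placement `p`
into `q`, which strictly decreases the cost of `a` (cost function `c`). -/
def JumpMove (c : (A → V) → A → ℝ) (p q : A → V) (a : A) (v : V) : Prop :=
  (∀ b, p b ≠ v) ∧ q = Function.update p a v ∧ c q a < c p a

/-- `q` is obtained from `p` by an improving jump. -/
def ImprovingJump (c : (A → V) → A → ℝ) (p q : A → V) : Prop :=
  ∃ a v, JumpMove c p q a v

/-- A placement is jump-stable if it admits no improving jump. -/
def JumpStable (c : (A → V) → A → ℝ) (p : A → V) : Prop :=
  ∀ q, ¬ ImprovingJump c p q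

/-- Some finite sequence of improving jumps starting at `p₀` ends in a jump-stable placement. -/
def ReachesStableJump (c : (A → V) → A → ℝ) (p₀ : A → V) : Prop :=
  ∃ (n : ℕ) (q : ℕ → A → V), q 0 = p₀ ∧
    (∀ i < n, ImprovingJump c (q i) (q (i + 1))) ∧ JumpStable c (q n)

/-- The placement cost: the number of discontent agents (one-versus-all cost). -/
def placementCost (G : SimpleGraph V) (t : A → Fin k) (τ : ℝ) (p : A → V) : ℕ :=
  (Finset.univ.filter fun a => costAll G t τ p a ≠ 0).card

/-- A graph is `Δ`-regular if every node has exactly `Δ` neighbors. -/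
def IsRegular (G : SimpleGraph V) (Δ : ℕ) : Prop :=
  ∀ v : V, (Finset.univ.filter fun u => G.Adj v u).card = Δ

/-!
An agent with `d` neighbors tolerates at most `(1 - τ) * d` neighbors of other types, so if this is
less than `1`, a single such neighbor already makes it discontent. Hence placement cost `0` means
that adjacent agents always share their type, i.e. that each connected component is occupied by
agents of one type, and such a placement exists iff the components can be distributed among the
types so that the sizes match.
-/

omit [Fintype V] in
lemma exists_comp_connectedComponentMk_eq_iff_forall_adj {α : Type*} (G : SimpleGraph V)
    (g : V → α) :
    (∃ c : G.ConnectedComponent → α, ∀ v, c (G.connectedComponentMk v) = g v) ↔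
      ∀ u v, G.Adj u v → g v = g u := by
  constructor
  · rintro ⟨c, hc⟩ u v huv
    rw [← hc u, ← hc v, SimpleGraph.ConnectedComponent.sound huv.reachable]
  · intro hadj
    have hwalk : ∀ u v, G.Walk u v → g u = g v := by
      intro u v w
      induction w with
      | nil => rfl
      | cons h _ ih => exact (hadj _ _ h).symm.trans ih
    exact ⟨SimpleGraph.ConnectedComponent.lift g fun u v w _ => hwalk u v w, fun _ => rfl⟩

lemma exists_bijective_comp_eq_iff_card_fiber_eq {κ : Type*} [DecidableEq κ] (t : A → κ)
    (g : V → κ) :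
    (∃ p : A → V, p.Bijective ∧ ∀ a, g (p a) = t a) ↔
      ∀ T, #{v | g v = T} = #{a | t a = T} := by
  constructor
  · rintro ⟨p, hp, hgp⟩ T
    exact (card_bijective p hp fun a => by simp [hgp]).symm
  · intro hcard
    have e (T : κ) : {a // t a = T} ≃ {v // g v = T} :=
      Fintype.equivOfCardEq (by simp only [Fintype.card_subtype, hcard])
    exact ⟨Equiv.ofFiberEquiv e, Equiv.bijective _, Equiv.ofFiberEquiv_map e⟩

lemma exists_forall_sum_fiber_eq_iff_exists_sum_eq {ι M : Type*} [Fintype ι]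
    [AddCancelCommMonoid M] (r : ι → M) (N : Fin 2 → M) (hN : ∑ i, r i = N 0 + N 1) :
    (∃ c : ι → Fin 2, ∀ T, ∑ i with c i = T, r i = N T) ↔ ∃ S, ∑ i ∈ S, r i = N 0 := by
  constructor
  · rintro ⟨c, hc⟩
    exact ⟨_, hc 0⟩
  · rintro ⟨S, hS⟩
    have hcompl : ∑ i ∈ Sᶜ, r i = N 1 :=
      add_left_cancel (a := N 0) (by rw [← hN, ← hS, sum_add_sum_compl])
    refine ⟨fun i => if i ∈ S then 0 else 1, Fin.forall_fin_two.mpr ⟨?_, ?_⟩⟩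
    · simpa using hS
    · simpa [← compl_filter] using hcompl

lemma IsRegular.degree_eq {G : SimpleGraph V} {d : ℕ} (hreg : IsRegular G d) (v : V) :
    G.degree v = d := by
  rw [← hreg v, ← G.card_neighborFinset_eq_degree, G.neighborFinset_eq_filter]

section ZeroCost

variable (G : SimpleGraph V) (t : A → Fin k) {τ : ℝ} {p : A → V}

omit [Fintype V] in
lemma posCount_add_negCountAll (p : A → V) (a : A) :
    posCount G t p a + negCountAll G t p a = #(nbrs G p a) := by
  simp only [posCount, negCountAll, nbrs, ← filter_filter]
  exact card_filter_add_card_filter_not _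

omit [Fintype V] in
lemma negCountAll_eq_zero_iff (p : A → V) (a : A) :
    negCountAll G t p a = 0 ↔ ∀ b, G.Adj (p a) (p b) → t b = t a := by
  simp [negCountAll, filter_eq_empty_iff]

omit [Fintype V] in
lemma costAll_eq_zero_iff_forall_adj {a : A} (hne : (nbrs G p a).Nonempty)
    (hτ : (1 - τ) * #(nbrs G p a) < 1) (hτ1 : τ ≤ 1) :
    costAll G t τ p a = 0 ↔ ∀ b, G.Adj (p a) (p b) → t b = t a := by
  have hcard : (posCount G t p a : ℝ) + negCountAll G t p a = #(nbrs G p a) := mod_cast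
    posCount_add_negCountAll G t p a
  have hpos : (0 : ℝ) < #(nbrs G p a) := mod_cast hne.card_pos
  have hcost : costAll G t τ p a = 0 ↔ (negCountAll G t p a : ℝ) ≤ (1 - τ) * #(nbrs G p a) := by
    rw [costAll, if_neg hne.ne_empty, max_eq_left_iff, sub_nonpos, hcard, le_div_iff₀ hpos]
    constructor <;> intro h <;> linarith
  rw [hcost, ← negCountAll_eq_zero_iff]
  constructor
  · intro h
    exact Nat.lt_one_iff.mp (mod_cast h.trans_lt hτ)
  · intro h
    rw [h, Nat.cast_zero]
    exact mul_nonneg (sub_nonneg.mpr hτ1) hpos.le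

lemma card_nbrs_of_bijective (hp : p.Bijective) (a : A) : #(nbrs G p a) = G.degree (p a) :=
  card_bijective p hp fun b => by simp [nbrs]

lemma placementCost_eq_zero_iff_forall_adj (hdeg : ∀ v, 0 < G.degree v)
    (hτ : ∀ v, (1 - τ) * G.degree v < 1) (hτ1 : τ ≤ 1) (hp : p.Bijective) :
    placementCost G t τ p = 0 ↔ ∀ a b, G.Adj (p a) (p b) → t b = t a := by
  simp only [placementCost, card_eq_zero, filter_eq_empty_iff, mem_univ, true_imp_iff, not_not]
  refine forall_congr' fun a => ?_
  have hcard := card_nbrs_of_bijective G hp a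
  have hne : (nbrs G p a).Nonempty := card_pos.mp (hcard ▸ hdeg (p a))
  exact costAll_eq_zero_iff_forall_adj G t hne (hcard ▸ hτ (p a)) hτ1

lemma placementCost_eq_zero_iff_exists_connectedComponent_map
    (hdeg : ∀ v, 0 < G.degree v) (hτ : ∀ v, (1 - τ) * G.degree v < 1) (hτ1 : τ ≤ 1)
    (hp : p.Bijective) :
    placementCost G t τ p = 0 ↔
      ∃ c : G.ConnectedComponent → Fin k, ∀ a, c (G.connectedComponentMk (p a)) = t a := by
  obtain ⟨e, rfl⟩ : ∃ e : A ≃ V, ⇑e = p := ⟨.ofBijective p hp, rfl⟩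
  have h := exists_comp_connectedComponentMk_eq_iff_forall_adj G (t ∘ e.symm)
  simp only [e.surjective.forall, Function.comp_apply, e.symm_apply_apply] at h
  rw [placementCost_eq_zero_iff_forall_adj G t hdeg hτ hτ1 hp, h]

end ZeroCost

theorem statement13_general {ι : Type*} [Fintype ι] (G : SimpleGraph V)
    (hdeg : ∀ v, 0 < G.degree v) (r : ι → ℕ) (comp : G.ConnectedComponent ≃ ι)
    (hsize : ∀ i, #{v | G.connectedComponentMk v = comp.symm i} = r i)
    (t : A → Fin k) {τ : ℝ} (hτ : ∀ v, (1 - τ) * G.degree v < 1) (hτ1 : τ ≤ 1) :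
    (∃ p : A → V, p.Bijective ∧ placementCost G t τ p = 0) ↔
      ∃ c : ι → Fin k, ∀ T, ∑ i with c i = T, r i = #{a | t a = T} := by
  have hfiber (c : ι → Fin k) (T : Fin k) :
      #{v | c (comp (G.connectedComponentMk v)) = T} = ∑ i with c i = T, r i := by
    simpa [← hsize, Equiv.eq_symm_apply] using (sum_card_fiberwise_eq_card_filter univ
      (univ.filter (c · = T)) fun v => comp (G.connectedComponentMk v)).symm
  calc (∃ p : A → V, p.Bijective ∧ placementCost G t τ p = 0)
    _ ↔ ∃ p : A → V, p.Bijective ∧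
          ∃ c : ι → Fin k, ∀ a, c (comp (G.connectedComponentMk (p a))) = t a := by
      refine exists_congr fun p => and_congr_right fun hp => ?_
      rw [placementCost_eq_zero_iff_exists_connectedComponent_map G t hdeg hτ hτ1 hp,
        (comp.arrowCongr (.refl _)).exists_congr_left]
      simp
    _ ↔ ∃ c : ι → Fin k, ∃ p : A → V, p.Bijective ∧
          ∀ a, c (comp (G.connectedComponentMk (p a))) = t a := by
      simp only [← exists_and_left]
      exact exists_comm
    _ ↔ ∃ c : ι → Fin k, ∀ T, ∑ i with c i = T, r i = #{a | t a = T} := by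
      simp only [← hfiber]
      exact exists_congr fun c =>
        exists_bijective_comp_eq_iff_card_fiber_eq t fun v => c (comp (G.connectedComponentMk v))

/-- On a `2`-regular graph that is a disjoint union of `m` cycles of lengths
`r 0, …, r (m-1)` (each at least `3`), with two agent types of sizes `n₁, n₂ ≥ 1`,
`n₁ + n₂ = n = |V|` agents and `τ ∈ (1/2, 1)`: a bijective placement with placement cost
`0` exists iff some subset of the cycle lengths sums to `n₁`. -/
theorem statement13 {V A : Type*} [Fintype V] [Fintype A]
    (G : SimpleGraph V) (hreg : IsRegular G 2)
    (m : ℕ) (r : Fin m → ℕ) (hr : ∀ i, 3 ≤ r i)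
    (comp : G.ConnectedComponent ≃ Fin m)
    (hsize : ∀ i,
      (Finset.univ.filter fun v => G.connectedComponentMk v = comp.symm i).card = r i)
    (n n₁ n₂ : ℕ) (hn : n = ∑ i, r i) (hV : Fintype.card V = n)
    (hA : Fintype.card A = n)
    (t : A → Fin 2)
    (h1 : (Finset.univ.filter fun a => t a = 0).card = n₁)
    (h2 : (Finset.univ.filter fun a => t a = 1).card = n₂)
    (hn1 : 1 ≤ n₁) (hn2 : 1 ≤ n₂) (hsum : n₁ + n₂ = n)
    (τ : ℝ) (hτ : 1 / 2 < τ) (hτ1 : τ < 1) :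
    (∃ p : A → V, Function.Bijective p ∧ placementCost G t τ p = 0) ↔
    (∃ S : Finset (Fin m), ∑ i ∈ S, r i = n₁) := by
  rw [statement13_general G (by simp [hreg.degree_eq]) r comp hsize t
      (fun v => by rw [hreg.degree_eq v]; push_cast; linarith) hτ1.le,
    exists_forall_sum_fiber_eq_iff_exists_sum_eq r _ (by rw [h1, h2, hsum, hn]), h1]

end Schelling
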